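/- Let ρ be a density matrix on ℂ^d and, for i = 1,…,n, let {Π^{(i)}_α}_{α=1}^{k_i} be d×d self-adjoint projections with Π^{(i)}_α Π^{(i)}_β = 0 for α ≠ β and Σ_{α=1}^{k_i} Π^{(i)}_α = 1. Suppose the family of histories is consistent, i.e. [Π^{(i)}_β, H^n_{i+1}(α)] = 0 for every i = 1,…,n−1, every β = 1,…,k_i, and every multi-index α. Then the decoherence matrix P^ω_{α,α'} := ω( Π^{(1)}_{α_1} ⋯ Π^{(n)}_{α_n} Π^{(n)}_{α'_n} ⋯ Π^{(1)}_{α'_1} ) is diagonal: P^ω_{α,α'} = 0 whenever α_n = α'_n and α ≠ α'. -/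

import Mathlib

open scoped ComplexOrder

/-- The history operator `H^n_j(α) = Π^{(n-1)}_{α_{n-1}} ⋯ Π^{(j)}_{α_j}`
(0-based indexing), with `histOp n k P α n = 1`. -/
noncomputable def histOp {M : Type*} [Monoid M] (n : ℕ) (k : Fin n → ℕ)
    (P : (i : Fin n) → Fin (k i) → M) (α : (i : Fin n) → Fin (k i)) (j : ℕ) : M :=
  if h : j < n then histOp n k P α (j + 1) * P ⟨j, h⟩ (α ⟨j, h⟩) else 1
termination_by n - j
decreasing_by omega

/-!
Divisibility `a ∣ b` in a noncommutative monoid means `b ∈ a M`. Consistency lets the factor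
`Π^{(i)}_{α_i}` of a history operator be moved to the far left, past all later factors, so
`Π^{(i)}_{α_i} ∣ H^n_1(α)` for every time `i`. If `α` and `α'` differ at time `i`, the product
`H^n_1(α)* H^n_1(α')` therefore contains `Π^{(i)}_{α_i} Π^{(i)}_{α'_i} = 0` in the middle.
-/

theorem star_mul_eq_zero_of_dvd_of_dvd {M : Type*} [SemigroupWithZero M] [StarMul M]
    {a b x y : M} (hab : star a * b = 0) (hax : a ∣ x) (hby : b ∣ y) : star x * y = 0 := by
  obtain ⟨c, rfl⟩ := hax
  obtain ⟨e, rfl⟩ := hby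
  calc star (a * c) * (b * e) = star c * (star a * b) * e := by simp only [star_mul, mul_assoc]
    _ = 0 := by rw [hab, mul_zero, zero_mul]

section HistoryOperator

variable {M : Type*} [Monoid M] {n : ℕ} (k : Fin n → ℕ) (P : (i : Fin n) → Fin (k i) → M)
  (α : (i : Fin n) → Fin (k i))

theorem histOp_of_lt {j : ℕ} (h : j < n) :
    histOp n k P α j = histOp n k P α (j + 1) * P ⟨j, h⟩ (α ⟨j, h⟩) := by
  rw [histOp, dif_pos h]

theorem histOp_of_le {j : ℕ} (h : n ≤ j) : histOp n k P α j = 1 := by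
  rw [histOp, dif_neg h.not_gt]

theorem histOp_succ_dvd (j : ℕ) : histOp n k P α (j + 1) ∣ histOp n k P α j := by
  obtain hj | hj := lt_or_ge j n
  · exact ⟨_, histOp_of_lt k P α hj⟩
  · rw [histOp_of_le k P α hj, histOp_of_le k P α (hj.trans j.le_succ)]

theorem histOp_dvd_histOp {i j : ℕ} (hji : j ≤ i) : histOp n k P α i ∣ histOp n k P α j := by
  induction i, hji using Nat.le_induction with
  | base => exact dvd_rfl
  | succ i _ ih => exact (histOp_succ_dvd k P α i).trans ih

variable {k P α} in
theorem dvd_histOp_of_commute {i : Fin n}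
    (hcomm : (i : ℕ) + 1 < n → Commute (P i (α i)) (histOp n k P α (i + 1)))
    {j : ℕ} (hji : j ≤ i) : P i (α i) ∣ histOp n k P α j := by
  have hcomm' : Commute (P i (α i)) (histOp n k P α (i + 1)) := by
    obtain hi | hi := lt_or_ge ((i : ℕ) + 1) n
    · exact hcomm hi
    · rw [histOp_of_le k P α hi]
      exact Commute.one_right _
  have hdvd : P i (α i) ∣ histOp n k P α i :=
    ⟨histOp n k P α (i + 1), by rw [histOp_of_lt k P α i.isLt, hcomm'.eq]⟩
  exact hdvd.trans (histOp_dvd_histOp k P α hji)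

end HistoryOperator

theorem consistent_histories_decoherence_matrix_diagonal_general {M : Type*} [MonoidWithZero M]
    [StarMul M] {n : ℕ} {k : Fin n → ℕ} {P : (i : Fin n) → Fin (k i) → M}
    (horth : ∀ i a b, a ≠ b → star (P i a) * P i b = 0)
    {α α' : (i : Fin n) → Fin (k i)}
    (hα : ∀ i : Fin n, (i : ℕ) + 1 < n → Commute (P i (α i)) (histOp n k P α (i + 1)))
    (hα' : ∀ i : Fin n, (i : ℕ) + 1 < n → Commute (P i (α' i)) (histOp n k P α' (i + 1)))
    (hne : α ≠ α') : star (histOp n k P α 0) * histOp n k P α' 0 = 0 := by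
  obtain ⟨i, hi⟩ := Function.ne_iff.mp hne
  exact star_mul_eq_zero_of_dvd_of_dvd (horth i _ _ hi)
    (dvd_histOp_of_commute (hα i) (Nat.zero_le _)) (dvd_histOp_of_commute (hα' i) (Nat.zero_le _))

/-- For a consistent family of histories (each `Π^{(i)}_β` commutes with
`H^n_{i+1}(α)`), the decoherence matrix
`P^ω_{α,α'} = ω(H^n_1(α)* H^n_1(α'))` is diagonal: it vanishes whenever
`α_n = α'_n` but `α ≠ α'`. -/
theorem consistent_histories_decoherence_matrix_diagonal {d : ℕ} (hd : 1 ≤ d)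
    (ρ : Matrix (Fin d) (Fin d) ℂ) (hρ : ρ.PosSemidef) (htr : ρ.trace = 1)
    (n : ℕ) (hn : 0 < n) (k : Fin n → ℕ) (hk : ∀ i, 1 ≤ k i)
    (P : (i : Fin n) → Fin (k i) → Matrix (Fin d) (Fin d) ℂ)
    (hPsa : ∀ i a, (P i a).IsHermitian)
    (hPorth : ∀ i a b, a ≠ b → P i a * P i b = 0)
    (hPidem : ∀ i a, P i a * P i a = P i a)
    (hPsum : ∀ i, ∑ a, P i a = 1)
    (hcons : ∀ (i : ℕ) (h : i + 1 < n) (β : Fin (k ⟨i, by omega⟩))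
        (α : (i : Fin n) → Fin (k i)),
      P ⟨i, by omega⟩ β * histOp n k P α (i + 1) =
        histOp n k P α (i + 1) * P ⟨i, by omega⟩ β) :
    ∀ α α' : (i : Fin n) → Fin (k i),
      α ⟨n - 1, by omega⟩ = α' ⟨n - 1, by omega⟩ → α ≠ α' →
        (ρ * (star (histOp n k P α 0) * histOp n k P α' 0)).trace = 0 := by
  intro α α' _ hne
  rw [consistent_histories_decoherence_matrix_diagonal_general
      (fun i a b hab => by rw [(hPsa i a).isSelfAdjoint.star_eq, hPorth i a b hab])
      (fun i hi => hcons i hi _ α) (fun i hi => hcons i hi _ α') hne, mul_zero, Matrix.trace_zero]
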